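/- arXiv:2405.02372 — 3 statements merged into one kernel-verified Lean document; each statement's English description precedes it below -/
import Mathlib

section
/- Let σ > 0 and let H be a real M×N matrix with HᵀH invertible. Define the pre-change Gaussian log-density ℓ_p(y | θ) = −(M/2)·ln(2πσ²) − ‖y − Hθ‖₂²/(2σ²) and the post-change Gaussian log-density ℓ_q(y | θ, a) = −(M/2)·ln(2πσ²) − ‖y − Hθ − a‖₂²/(2σ²). Then for every y ∈ ℝ^M and every x ∈ ℝ^M with Hᵀx = 0, both suprema over θ ∈ ℝ^N are attained and sup_{θ∈ℝ^N} ℓ_q(y | θ, x) − sup_{θ∈ℝ^N} ℓ_p(y | θ) = (2⟨x, y⟩ − ‖x‖₂²)/(2σ²). -/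
open Matrix

/-!
The range of `HᵀH` lies in that of `Hᵀ` and has the same dimension, so the normal equations
`Hᵀ (y - H θ₀) = 0` are solvable; by Pythagoras each solution `θ₀` minimizes the squared residual
`‖y - H θ‖²`. When `Hᵀ x = 0` the normal equations for `y - x` are those for `y`, so the same `θ₀`
maximizes both likelihoods. The two maxima then differ by
`‖y - H θ₀‖² - ‖y - H θ₀ - x‖² = 2⟨x, y - H θ₀⟩ - ‖x‖²`, up to the factor `2σ²`, and
`⟨x, H θ₀⟩ = 0`.
-/

section LeastSquares

variable {m n R : Type*} [Fintype m] [Fintype n]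

theorem dotProduct_mulVec_eq_zero_of_transpose_mulVec_eq_zero [CommSemiring R]
    {A : Matrix m n R} {r : m → R} (hr : Aᵀ *ᵥ r = 0) (v : n → R) : r ⬝ᵥ A *ᵥ v = 0 := by
  rw [dotProduct_mulVec, ← mulVec_transpose, hr, zero_dotProduct]

theorem sum_sub_sq_eq_sub_dotProduct_add [CommRing R] (u v : m → R) :
    ∑ i, (u - v) i ^ 2 = ∑ i, u i ^ 2 - 2 * (v ⬝ᵥ u) + ∑ i, v i ^ 2 := by
  simp only [dotProduct, Finset.mul_sum, ← Finset.sum_sub_distrib, ← Finset.sum_add_distrib]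
  exact Finset.sum_congr rfl fun i _ => by rw [Pi.sub_apply]; ring

variable [Field R] [LinearOrder R] [IsStrictOrderedRing R]

theorem range_mulVecLin_transpose_mul_self (A : Matrix m n R) :
    LinearMap.range (Aᵀ * A).mulVecLin = LinearMap.range Aᵀ.mulVecLin := by
  apply Submodule.eq_of_le_of_finrank_eq
  · rw [mulVecLin_mul]
    exact LinearMap.range_comp_le_range _ _
  · exact (rank_transpose_mul_self A).trans (rank_transpose A).symm

theorem exists_transpose_mulVec_sub_mulVec_eq_zero (A : Matrix m n R) (b : m → R) :
    ∃ v, Aᵀ *ᵥ (b - A *ᵥ v) = 0 := by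
  have hb : Aᵀ *ᵥ b ∈ LinearMap.range (Aᵀ * A).mulVecLin :=
    range_mulVecLin_transpose_mul_self A ▸ LinearMap.mem_range_self Aᵀ.mulVecLin b
  obtain ⟨v, hv⟩ := hb
  exact ⟨v, by rw [mulVec_sub, mulVec_mulVec, ← mulVecLin_apply (Aᵀ * A), hv, sub_self]⟩

theorem sum_sq_sub_mulVec_le_of_transpose_mulVec_eq_zero {A : Matrix m n R} {b : m → R}
    {v : n → R} (hv : Aᵀ *ᵥ (b - A *ᵥ v) = 0) (w : n → R) :
    ∑ i, (b - A *ᵥ v) i ^ 2 ≤ ∑ i, (b - A *ᵥ w) i ^ 2 := by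
  have horth : A *ᵥ (w - v) ⬝ᵥ (b - A *ᵥ v) = 0 := by
    rw [dotProduct_comm, dotProduct_mulVec_eq_zero_of_transpose_mulVec_eq_zero hv]
  calc ∑ i, (b - A *ᵥ v) i ^ 2
      ≤ ∑ i, (b - A *ᵥ v) i ^ 2 + ∑ i, (A *ᵥ (w - v)) i ^ 2 :=
        le_add_of_nonneg_right (Finset.sum_nonneg fun i _ => sq_nonneg _)
    _ = ∑ i, (b - A *ᵥ v - A *ᵥ (w - v)) i ^ 2 := by
        rw [sum_sub_sq_eq_sub_dotProduct_add (b - A *ᵥ v), horth, mul_zero, sub_zero]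
    _ = ∑ i, (b - A *ᵥ w) i ^ 2 := by
        rw [mulVec_sub, sub_sub, add_sub_cancel]

end LeastSquares

section GaussianLogDensity

variable {m n : Type*} [Fintype m] [Fintype n]

/-- The logarithm of the density of the centered Gaussian `N(0, σ² I)` on `ℝᵐ`, for `σ ≠ 0`. The
log-likelihood of an observation `y` with mean `μ` is its value at the residual `y - μ`. -/
noncomputable def gaussianLogDensity (σ : ℝ) (r : m → ℝ) : ℝ :=
  -((Fintype.card m : ℝ) / 2) * Real.log (2 * Real.pi * σ ^ 2) - (∑ i, r i ^ 2) / (2 * σ ^ 2)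

theorem gaussianLogDensity_le_gaussianLogDensity_iff {σ : ℝ} (hσ : σ ≠ 0) {r s : m → ℝ} :
    gaussianLogDensity σ r ≤ gaussianLogDensity σ s ↔ ∑ i, s i ^ 2 ≤ ∑ i, r i ^ 2 := by
  have hpos : 0 < 2 * σ ^ 2 := by positivity
  rw [gaussianLogDensity, gaussianLogDensity, sub_le_sub_iff_left, div_le_div_iff_of_pos_right hpos]

theorem gaussianLogDensity_sub_sub_gaussianLogDensity (σ : ℝ) (r x : m → ℝ) :
    gaussianLogDensity σ (r - x) - gaussianLogDensity σ r =
      (2 * (x ⬝ᵥ r) - ∑ i, x i ^ 2) / (2 * σ ^ 2) := by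
  rw [gaussianLogDensity, gaussianLogDensity, sum_sub_sq_eq_sub_dotProduct_add]
  ring

theorem isGreatest_range_gaussianLogDensity_sub_mulVec {σ : ℝ} (hσ : σ ≠ 0) {A : Matrix m n ℝ}
    {b : m → ℝ} {v : n → ℝ} (hv : Aᵀ *ᵥ (b - A *ᵥ v) = 0) :
    IsGreatest (Set.range fun w => gaussianLogDensity σ (b - A *ᵥ w))
      (gaussianLogDensity σ (b - A *ᵥ v)) := by
  refine ⟨Set.mem_range_self v, Set.forall_mem_range.2 fun w => ?_⟩
  exact (gaussianLogDensity_le_gaussianLogDensity_iff hσ).2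
    (sum_sq_sub_mulVec_le_of_transpose_mulVec_eq_zero hv w)

theorem stmt_4_general {σ : ℝ} (hσ : σ ≠ 0) (H : Matrix m n ℝ) (y : m → ℝ) {x : m → ℝ}
    (hx : Hᵀ *ᵥ x = 0) :
    ∃ Sp Sq : ℝ,
      IsGreatest (Set.range fun θ => gaussianLogDensity σ (y - H *ᵥ θ)) Sp ∧
      IsGreatest (Set.range fun θ => gaussianLogDensity σ (y - H *ᵥ θ - x)) Sq ∧
      Sq - Sp = (2 * (x ⬝ᵥ y) - ∑ i, x i ^ 2) / (2 * σ ^ 2) := by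
  obtain ⟨θ₀, hp⟩ := exists_transpose_mulVec_sub_mulVec_eq_zero H y
  have hq : Hᵀ *ᵥ (y - x - H *ᵥ θ₀) = 0 := by
    rw [sub_right_comm, mulVec_sub, hp, hx, sub_zero]
  refine ⟨gaussianLogDensity σ (y - H *ᵥ θ₀), gaussianLogDensity σ (y - H *ᵥ θ₀ - x),
    isGreatest_range_gaussianLogDensity_sub_mulVec hσ hp, ?_, ?_⟩
  · simpa only [sub_right_comm y x] using isGreatest_range_gaussianLogDensity_sub_mulVec hσ hq
  · rw [gaussianLogDensity_sub_sub_gaussianLogDensity, dotProduct_sub,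
      dotProduct_mulVec_eq_zero_of_transpose_mulVec_eq_zero hx, sub_zero]

end GaussianLogDensity

/-- Difference of maximized pre- and post-change Gaussian log-likelihoods:
for `x` orthogonal to the column space of `H` (i.e. `Hᵀ x = 0`), both suprema over `θ`
are attained and `sup_θ ℓ_q(y|θ,x) - sup_θ ℓ_p(y|θ) = (2⟨x,y⟩ - ‖x‖₂²)/(2σ²)`. -/
theorem stmt_4 (M N : ℕ) (σ : ℝ) (hσ : 0 < σ) (H : Matrix (Fin M) (Fin N) ℝ)
    (hinv : IsUnit (Hᵀ * H)) (y x : Fin M → ℝ) (hx : Hᵀ.mulVec x = 0) :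
    let ℓp : (Fin N → ℝ) → ℝ := fun θ =>
      -((M : ℝ) / 2) * Real.log (2 * Real.pi * σ ^ 2)
        - (∑ i, (y i - H.mulVec θ i) ^ 2) / (2 * σ ^ 2)
    let ℓq : (Fin N → ℝ) → ℝ := fun θ =>
      -((M : ℝ) / 2) * Real.log (2 * Real.pi * σ ^ 2)
        - (∑ i, (y i - H.mulVec θ i - x i) ^ 2) / (2 * σ ^ 2)
    ∃ Sp Sq : ℝ, IsGreatest (Set.range ℓp) Sp ∧ IsGreatest (Set.range ℓq) Sq ∧
      Sq - Sp = (2 * (x ⬝ᵥ y) - ∑ i, (x i) ^ 2) / (2 * σ ^ 2) := by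
  simpa only [gaussianLogDensity, Fintype.card_fin, Pi.sub_apply] using stmt_4_general hσ.ne' H y hx
end

section
/- Let f : ℝ^M → ℝ be twice continuously differentiable with L-Lipschitz second derivative, let x ∈ ℝ^M, η > 0, κ ≥ 0 and w ≥ 0. Suppose (1/2)·f″(x)(d, d) ≤ κ‖d‖₂² for all d ∈ ℝ^M, and define the gradient step x⁺ := x − η·∇f(x). If ‖x‖_∞ ≤ w and ‖x⁺‖_∞ ≤ w, then f(x⁺) − f(x) ≤ (κ + (w·L·√M)/3 − 1/η)·‖x⁺ − x‖₂². -/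
/-!
Integrating the Lipschitz bound on `f''` twice along the segment from `x` to `x⁺` gives the cubic
Taylor estimate `f x⁺ - f x ≤ f' x d + ½ f'' x (d, d) + (L / 6) ‖d‖ ^ 3` with `d = x⁺ - x`. For a
gradient step, `d = -η ∇f(x)`, so the linear term is `-(1 / η) ‖d‖ ^ 2`. Two points of the box of
half-width `w` are at Euclidean distance at most `2 w √M`, which turns the cubic remainder into
`(w L √M / 3) ‖d‖ ^ 2`.
-/

open Set AffineMap

section Taylor

variable {E F : Type*} [NormedAddCommGroup E] [NormedSpace ℝ E]
  [NormedAddCommGroup F] [NormedSpace ℝ F]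

theorem norm_sub_le_of_norm_deriv_le_mul_pow {φ φ' : ℝ → F} {a b C : ℝ} (n : ℕ) (hab : a ≤ b)
    (hφ : ∀ t ∈ Icc a b, HasDerivWithinAt φ (φ' t) (Icc a b) t)
    (bound : ∀ t ∈ Ico a b, ‖φ' t‖ ≤ C * (t - a) ^ n) :
    ‖φ b - φ a‖ ≤ C / (n + 1) * (b - a) ^ (n + 1) := by
  have hφ_right : ∀ t ∈ Ico a b, HasDerivWithinAt (fun t ↦ φ t - φ a) (φ' t) (Ici t) t :=
    fun t ht ↦ ((hφ t (Ico_subset_Icc_self ht)).mono_of_mem_nhdsWithin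
      (Icc_mem_nhdsGE_of_mem ht)).sub_const _
  have hbound_deriv (t : ℝ) : HasDerivAt (fun t ↦ C / (n + 1) * (t - a) ^ (n + 1))
      (C * (t - a) ^ n) t := by
    refine ((((hasDerivAt_id t).sub_const a).pow (n + 1)).const_mul (C / (n + 1))).congr_deriv ?_
    simp only [id_eq, Nat.cast_add, Nat.cast_one, Nat.add_sub_cancel, mul_one]
    field_simp
  exact image_norm_le_of_norm_deriv_right_le_deriv_boundary
    (fun t ht ↦ (hφ t ht).continuousWithinAt.sub continuousWithinAt_const) hφ_right
    (by simp) hbound_deriv bound (right_mem_Icc.2 hab)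

variable {s : Set E} {x y : E} {L : NNReal}

theorem hasDerivWithinAt_comp_lineMap {f : E → F} {f' : E → E →L[ℝ] F} (hs : Convex ℝ s)
    (hf : ∀ z ∈ s, HasFDerivWithinAt f (f' z) s z) (hx : x ∈ s) (hy : y ∈ s)
    {t : ℝ} (ht : t ∈ Icc (0 : ℝ) 1) :
    HasDerivWithinAt (fun t ↦ f (lineMap x y t)) (f' (lineMap x y t) (y - x)) (Icc 0 1) t :=
  (hf _ (hs.lineMap_mem hx hy ht)).comp_hasDerivWithinAt t hasDerivWithinAt_lineMap
    fun _ hr ↦ hs.lineMap_mem hx hy hr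

theorem norm_lineMap_sub_left (x y : E) (t : ℝ) : ‖lineMap x y t - x‖ = |t| * ‖y - x‖ := by
  rw [← dist_eq_norm, dist_lineMap_left, Real.norm_eq_abs, dist_eq_norm']

theorem norm_sub_sub_le_of_lipschitzOnWith_fderiv {f : E → F} {f' : E → E →L[ℝ] F}
    (hs : Convex ℝ s) (hf : ∀ z ∈ s, HasFDerivWithinAt f (f' z) s z)
    (hL : LipschitzOnWith L f' s) (hx : x ∈ s) (hy : y ∈ s) :
    ‖f y - f x - f' x (y - x)‖ ≤ L / 2 * ‖y - x‖ ^ 2 := by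
  have hderiv : ∀ t ∈ Icc (0 : ℝ) 1, HasDerivWithinAt
      (fun t ↦ f (lineMap x y t) - t • f' x (y - x))
      (f' (lineMap x y t) (y - x) - f' x (y - x)) (Icc 0 1) t := fun t ht ↦ by
    simpa only [id_eq, one_smul] using (hasDerivWithinAt_comp_lineMap hs hf hx hy ht).fun_sub
      ((hasDerivWithinAt_id t _).smul_const (f' x (y - x)))
  have hbound : ∀ t ∈ Ico (0 : ℝ) 1, ‖f' (lineMap x y t) (y - x) - f' x (y - x)‖ ≤
      L * ‖y - x‖ ^ 2 * (t - 0) ^ 1 := fun t ht ↦ calc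
    _ ≤ ‖f' (lineMap x y t) - f' x‖ * ‖y - x‖ := (f' (lineMap x y t) - f' x).le_opNorm _
    _ ≤ L * ‖lineMap x y t - x‖ * ‖y - x‖ := by
      gcongr
      exact hL.norm_sub_le (hs.lineMap_mem hx hy (Ico_subset_Icc_self ht)) hx
    _ = L * ‖y - x‖ ^ 2 * (t - 0) ^ 1 := by rw [norm_lineMap_sub_left, abs_of_nonneg ht.1]; ring
  have := norm_sub_le_of_norm_deriv_le_mul_pow 1 zero_le_one hderiv hbound
  convert this using 1
  · simp [sub_right_comm]
  · push_cast; ring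

/-- Along the segment from `x` to `y`, the second-order remainder of `f` has as its derivative the
first-order remainder of `f'`, applied to `y - x`. -/
theorem norm_sub_taylor_two_le_of_lipschitzOnWith {f : E → F} {f' : E → E →L[ℝ] F}
    {f'' : E → E →L[ℝ] E →L[ℝ] F} (hs : Convex ℝ s)
    (hf : ∀ z ∈ s, HasFDerivWithinAt f (f' z) s z)
    (hf' : ∀ z ∈ s, HasFDerivWithinAt f' (f'' z) s z)
    (hL : LipschitzOnWith L f'' s) (hx : x ∈ s) (hy : y ∈ s) :
    ‖f y - f x - f' x (y - x) - (1 / 2 : ℝ) • f'' x (y - x) (y - x)‖ ≤ L / 6 * ‖y - x‖ ^ 3 := by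
  set d := y - x with hd
  have hderiv : ∀ t ∈ Icc (0 : ℝ) 1, HasDerivWithinAt
      (fun t ↦ f (lineMap x y t) - t • f' x d - (t ^ 2 / 2) • f'' x d d)
      (f' (lineMap x y t) d - f' x d - t • f'' x d d) (Icc 0 1) t := fun t ht ↦ by
    have hsq : HasDerivWithinAt (fun t : ℝ ↦ t ^ 2 / 2) t (Icc 0 1) t := by
      simpa using ((hasDerivAt_pow 2 t).div_const 2).hasDerivWithinAt
    simpa only [id_eq, one_smul] using ((hasDerivWithinAt_comp_lineMap hs hf hx hy ht).fun_sub
      ((hasDerivWithinAt_id t _).smul_const (f' x d))).fun_sub (hsq.smul_const (f'' x d d))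
  have hbound : ∀ t ∈ Ico (0 : ℝ) 1, ‖f' (lineMap x y t) d - f' x d - t • f'' x d d‖ ≤
      L / 2 * ‖d‖ ^ 3 * (t - 0) ^ 2 := fun t ht ↦ calc
    _ = ‖(f' (lineMap x y t) - f' x - f'' x (lineMap x y t - x)) d‖ := by
      simp [lineMap_apply, hd]
    _ ≤ ‖f' (lineMap x y t) - f' x - f'' x (lineMap x y t - x)‖ * ‖d‖ :=
      ContinuousLinearMap.le_opNorm _ _
    _ ≤ L / 2 * ‖lineMap x y t - x‖ ^ 2 * ‖d‖ := by
      gcongr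
      exact norm_sub_sub_le_of_lipschitzOnWith_fderiv hs hf' hL hx
        (hs.lineMap_mem hx hy (Ico_subset_Icc_self ht))
    _ = L / 2 * ‖d‖ ^ 3 * (t - 0) ^ 2 := by rw [norm_lineMap_sub_left, abs_of_nonneg ht.1]; ring
  have := norm_sub_le_of_norm_deriv_le_mul_pow 2 zero_le_one hderiv hbound
  convert this using 1
  · simp [sub_right_comm]
  · push_cast; ring

end Taylor

theorem euclideanSpace_norm_le_sqrt_card_mul {𝕜 ι : Type*} [RCLike 𝕜] [Fintype ι]
    {v : EuclideanSpace 𝕜 ι} {c : ℝ} (hc : 0 ≤ c) (hv : ∀ i, ‖v i‖ ≤ c) :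
    ‖v‖ ≤ √(Fintype.card ι) * c := by
  rw [EuclideanSpace.norm_eq, ← Real.sqrt_sq hc, ← Real.sqrt_mul (Nat.cast_nonneg _)]
  gcongr
  calc ∑ i, ‖v i‖ ^ 2 ≤ ∑ _i : ι, c ^ 2 := by gcongr with i; exact hv i
    _ = Fintype.card ι * c ^ 2 := by simp

section GradientStep

variable {H : Type*} [NormedAddCommGroup H] [InnerProductSpace ℝ H] [CompleteSpace H]

theorem fderiv_apply_gradient_step (f : H → ℝ) (x : H) {η : ℝ} (hη : η ≠ 0) :
    fderiv ℝ f x ((x - η • gradient f x) - x) =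
      -(1 / η) * ‖(x - η • gradient f x) - x‖ ^ 2 := by
  rw [sub_sub_cancel_left, norm_neg, norm_smul, mul_pow, Real.norm_eq_abs, sq_abs, map_neg,
    map_smul, ← inner_gradient_left, real_inner_self_eq_norm_sq, smul_eq_mul]
  field_simp

theorem stmt_14_general {f : H → ℝ} {s : Set H} (hs : Convex ℝ s)
    (hf : ∀ z ∈ s, DifferentiableAt ℝ f z) (hf' : ∀ z ∈ s, DifferentiableAt ℝ (fderiv ℝ f) z)
    {L : NNReal} (hL : LipschitzOnWith L (fderiv ℝ (fderiv ℝ f)) s) {x : H} {η κ R : ℝ}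
    (hη : η ≠ 0) (hquad : ∀ d, (1 / 2) * fderiv ℝ (fderiv ℝ f) x d d ≤ κ * ‖d‖ ^ 2)
    (hx : x ∈ s) (hxp : x - η • gradient f x ∈ s) (hR : ‖(x - η • gradient f x) - x‖ ≤ R) :
    f (x - η • gradient f x) - f x ≤
      (κ + L * R / 6 - 1 / η) * ‖(x - η • gradient f x) - x‖ ^ 2 := by
  have taylor := le_of_abs_le <| norm_sub_taylor_two_le_of_lipschitzOnWith hs
    (fun z hz ↦ (hf z hz).hasFDerivAt.hasFDerivWithinAt)
    (fun z hz ↦ (hf' z hz).hasFDerivAt.hasFDerivWithinAt) hL hx hxp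
  rw [fderiv_apply_gradient_step f x hη, smul_eq_mul] at taylor
  have curvature := hquad ((x - η • gradient f x) - x)
  set d := (x - η • gradient f x) - x
  have remainder : L / 6 * ‖d‖ ^ 3 ≤ L / 6 * (R * ‖d‖ ^ 2) := by
    rw [pow_succ' _ 2]
    gcongr
  linarith

end GradientStep

/-- Per-block descent inequality (Lemma 1): for a gradient step
`x⁺ = x - η ∇f(x)` with curvature bound `½ f''(x)(d,d) ≤ κ‖d‖²` and
sup-norm bounds `‖x‖_∞ ≤ w`, `‖x⁺‖_∞ ≤ w`,
`f(x⁺) - f(x) ≤ (κ + wL√M/3 - 1/η)‖x⁺ - x‖₂²`. -/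
theorem stmt_14 (M : ℕ) (f : EuclideanSpace ℝ (Fin M) → ℝ) (hf : ContDiff ℝ 2 f)
    (L : NNReal) (hL : LipschitzWith L (fderiv ℝ (fderiv ℝ f)))
    (x : EuclideanSpace ℝ (Fin M)) (η κ w : ℝ) (hη : 0 < η) (hκ : 0 ≤ κ) (hw : 0 ≤ w)
    (hquad : ∀ d : EuclideanSpace ℝ (Fin M),
      (1 / 2) * fderiv ℝ (fderiv ℝ f) x d d ≤ κ * ‖d‖ ^ 2)
    (hx : ∀ i, |x i| ≤ w)
    (hxp : ∀ i, |(x - η • gradient f x) i| ≤ w) :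
    f (x - η • gradient f x) - f x ≤
      (κ + w * (L : ℝ) * Real.sqrt M / 3 - 1 / η) * ‖(x - η • gradient f x) - x‖ ^ 2 := by
  have hstep : ‖(x - η • gradient f x) - x‖ ≤ √M * (w + w) := by
    simpa only [Fintype.card_fin] using euclideanSpace_norm_le_sqrt_card_mul (add_nonneg hw hw)
      fun i ↦ (norm_sub_le _ _).trans (add_le_add (hxp i) (hx i))
  have hf' : ContDiff ℝ 1 (fderiv ℝ f) := hf.fderiv_right (by norm_num)
  have descent := stmt_14_general convex_univ (fun z _ ↦ hf.differentiable (by norm_num) z)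
    (fun z _ ↦ hf'.differentiable one_ne_zero z) hL.lipschitzOnWith hη.ne' hquad
    (mem_univ x) (mem_univ _) hstep
  linarith
end

section
/- Let τ ≥ 1 be an integer, w ≥ 0, and let u : ℕ → ℝ^M be a sequence with ‖u^k‖_∞ ≤ w for all k. Let V ⊆ ℕ be a set of active iteration indices such that: (i) u^{k+1} = u^k whenever k + 1 ∉ V, and (ii) for every k, the set {k+1, …, k+τ} contains an element of V. For each k, let k̄ denote the smallest element of V strictly greater than k. Then for all natural numbers a ≤ b, Σ_{k=a}^{b} ‖u^{k̄} − u^k‖₂² ≤ τ · Σ_{k=a}^{b} ‖u^{k+1} − u^k‖₂² + 4τ(τ−1)·M·w². -/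
/-!
Between `k` and `k̄` the sequence moves only once, at the step from `k̄ - 1` to `k̄`. That step
starts within `τ - 1` iterations of `k`, so its cost is at most the total cost of the `τ` steps
starting at `k, …, k + τ - 1`. Exchanging the sums over `k` and over the delay `i < τ`, each delay
contributes the sum of the step costs over a window shifted by `i`, which has only `i` indices
outside the original window. This overhang costs at most `0 + 1 + ⋯ + (τ - 1)` maximal steps in
total.
-/

section ShiftedSums

open Finset

variable {R : Type*} [AddCommMonoid R] [PartialOrder R] [IsOrderedAddMonoid R]
  {f : ℕ → R} {C : R}

theorem sum_Icc_add_right_le_add_nsmul (hf : ∀ k, 0 ≤ f k) (hC : ∀ k, f k ≤ C) (a b i : ℕ) :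
    ∑ k ∈ Icc a b, f (k + i) ≤ ∑ k ∈ Icc a b, f k + i • C := by
  have hsub : Icc (a + i) (b + i) ⊆ Icc a b ∪ Ioc b (b + i) := by
    intro k
    simp only [mem_union, mem_Icc, mem_Ioc]
    lia
  have hdisj : Disjoint (Icc a b) (Ioc b (b + i)) :=
    disjoint_left.2 fun k hk hk' => (mem_Ioc.1 hk').1.not_ge (mem_Icc.1 hk).2
  calc
    ∑ k ∈ Icc a b, f (k + i) = ∑ k ∈ Icc (a + i) (b + i), f k := by
      rw [← map_add_right_Icc, sum_map]
      rfl
    _ ≤ ∑ k ∈ Icc a b ∪ Ioc b (b + i), f k :=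
      sum_le_sum_of_subset_of_nonneg hsub fun k _ _ => hf k
    _ = ∑ k ∈ Icc a b, f k + ∑ k ∈ Ioc b (b + i), f k := sum_union hdisj
    _ ≤ ∑ k ∈ Icc a b, f k + i • C := by
      gcongr
      simpa using sum_le_card_nsmul (Ioc b (b + i)) f C fun k _ => hC k

theorem sum_Icc_sum_range_add_le (hf : ∀ k, 0 ≤ f k) (hC : ∀ k, f k ≤ C) (a b n : ℕ) :
    ∑ k ∈ Icc a b, ∑ i ∈ range n, f (k + i) ≤ n • ∑ k ∈ Icc a b, f k + n.choose 2 • C := by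
  calc
    ∑ k ∈ Icc a b, ∑ i ∈ range n, f (k + i) = ∑ i ∈ range n, ∑ k ∈ Icc a b, f (k + i) := sum_comm
    _ ≤ ∑ i ∈ range n, (∑ k ∈ Icc a b, f k + i • C) :=
      sum_le_sum fun i _ => sum_Icc_add_right_le_add_nsmul hf hC a b i
    _ = n • ∑ k ∈ Icc a b, f k + n.choose 2 • C := by
      rw [sum_add_distrib, sum_const, card_range, sum_nsmul_assoc, sum_range_id,
        Nat.choose_two_right]

end ShiftedSums

section ActiveIterations

variable {α : Type*} {u : ℕ → α} {V : Set ℕ}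

theorem eq_of_disjoint_Ioc (hfix : ∀ k, k + 1 ∉ V → u (k + 1) = u k) {k m : ℕ} (hkm : k ≤ m)
    (hV : Disjoint V (Set.Ioc k m)) : u m = u k := by
  induction m, hkm using Nat.le_induction with
  | base => rfl
  | succ m hkm ih =>
    have hm : m + 1 ∉ V := fun hm => Set.disjoint_left.1 hV hm ⟨by lia, le_rfl⟩
    rw [hfix m hm, ih (hV.mono_right (Set.Ioc_subset_Ioc_right m.le_succ))]

theorem exists_add_one_eq_of_isLeast (hfix : ∀ k, k + 1 ∉ V → u (k + 1) = u k) {k n : ℕ}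
    (hn : IsLeast (V ∩ Set.Ioi k) n) : ∃ i, k + i + 1 = n ∧ u (k + i) = u k := by
  obtain ⟨i, rfl⟩ := Nat.exists_eq_add_of_lt hn.1.2
  refine ⟨i, rfl, eq_of_disjoint_Ioc hfix (Nat.le_add_right k i) ?_⟩
  exact Set.disjoint_left.2 fun j hjV hj =>
    (Nat.lt_succ_of_le hj.2).not_ge (hn.2 ⟨hjV, hj.1⟩)

end ActiveIterations

section Staleness

variable {E : Type*} [PseudoMetricSpace E] {u : ℕ → E} {V : Set ℕ}

theorem dist_pow_le_sum_range_of_isLeast (hfix : ∀ k, k + 1 ∉ V → u (k + 1) = u k) {k n τ : ℕ}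
    (hn : IsLeast (V ∩ Set.Ioi k) n) (hnτ : n ≤ k + τ) (p : ℕ) :
    dist (u n) (u k) ^ p ≤ ∑ i ∈ Finset.range τ, dist (u (k + i + 1)) (u (k + i)) ^ p := by
  obtain ⟨i, rfl, hi⟩ := exists_add_one_eq_of_isLeast hfix hn
  rw [← hi]
  exact Finset.single_le_sum (f := fun i => dist (u (k + i + 1)) (u (k + i)) ^ p)
    (fun _ _ => by positivity) (Finset.mem_range.2 (by lia))

theorem stmt_15_general (hfix : ∀ k, k + 1 ∉ V → u (k + 1) = u k) {τ : ℕ}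
    (hactive : ∀ k, (V ∩ Set.Ioc k (k + τ)).Nonempty) {kbar : ℕ → ℕ}
    (hkbar : ∀ k, IsLeast (V ∩ Set.Ioi k) (kbar k)) {p : ℕ} {C : ℝ}
    (hC : ∀ k, dist (u (k + 1)) (u k) ^ p ≤ C) (a b : ℕ) :
    ∑ k ∈ Finset.Icc a b, dist (u (kbar k)) (u k) ^ p ≤
      τ * ∑ k ∈ Finset.Icc a b, dist (u (k + 1)) (u k) ^ p + τ.choose 2 * C := by
  have hkbar_le (k : ℕ) : kbar k ≤ k + τ :=
    let ⟨_, hjV, hkj, hjτ⟩ := hactive k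
    ((hkbar k).2 ⟨hjV, hkj⟩).trans hjτ
  calc
    ∑ k ∈ Finset.Icc a b, dist (u (kbar k)) (u k) ^ p
      ≤ ∑ k ∈ Finset.Icc a b, ∑ i ∈ Finset.range τ, dist (u (k + i + 1)) (u (k + i)) ^ p :=
      Finset.sum_le_sum fun k _ => dist_pow_le_sum_range_of_isLeast hfix (hkbar k) (hkbar_le k) p
    _ ≤ τ * ∑ k ∈ Finset.Icc a b, dist (u (k + 1)) (u k) ^ p + τ.choose 2 * C := by
      simpa only [nsmul_eq_mul] using
        sum_Icc_sum_range_add_le (fun k => by positivity) hC a b τ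

end Staleness

theorem euclideanSpace_norm_sq_le_card_mul {𝕜 ι : Type*} [RCLike 𝕜] [Fintype ι]
    {x : EuclideanSpace 𝕜 ι} {c : ℝ} (hx : ∀ i, ‖x i‖ ≤ c) : ‖x‖ ^ 2 ≤ Fintype.card ι * c ^ 2 := by
  rw [EuclideanSpace.norm_sq_eq, ← nsmul_eq_mul]
  exact Finset.sum_le_card_nsmul _ _ _ fun i _ => pow_le_pow_left₀ (norm_nonneg _) (hx i) 2

/-- Staleness bound for the asynchronous updates: if `u` only changes at active
iterations `V`, every window of `τ` consecutive iterations contains an active one,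
`‖u^k‖_∞ ≤ w`, and `kbar k` is the smallest element of `V` strictly greater than `k`,
then `∑_{k=a}^{b} ‖u^{k̄} - u^k‖₂² ≤ τ ∑_{k=a}^{b} ‖u^{k+1} - u^k‖₂² + 4τ(τ-1)Mw²`. -/
theorem stmt_15 (M τ : ℕ) (hτ : 1 ≤ τ) (w : ℝ) (hw : 0 ≤ w)
    (u : ℕ → EuclideanSpace ℝ (Fin M))
    (hbound : ∀ k, ∀ i, |u k i| ≤ w)
    (V : Set ℕ)
    (hfix : ∀ k, k + 1 ∉ V → u (k + 1) = u k)
    (hactive : ∀ k, ∃ j ∈ V, k + 1 ≤ j ∧ j ≤ k + τ)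
    (kbar : ℕ → ℕ)
    (hkbar : ∀ k, kbar k ∈ V ∧ k < kbar k ∧ ∀ j ∈ V, k < j → kbar k ≤ j) :
    ∀ a b : ℕ, a ≤ b →
      ∑ k ∈ Finset.Icc a b, ‖u (kbar k) - u k‖ ^ 2 ≤
        (τ : ℝ) * ∑ k ∈ Finset.Icc a b, ‖u (k + 1) - u k‖ ^ 2
          + 4 * (τ : ℝ) * ((τ : ℝ) - 1) * (M : ℝ) * w ^ 2 := by
  intro a b _
  have hstep (k : ℕ) : dist (u (k + 1)) (u k) ^ 2 ≤ M * (2 * w) ^ 2 := by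
    have hcoord (i : Fin M) : ‖(u (k + 1) - u k) i‖ ≤ 2 * w :=
      two_mul w ▸ norm_sub_le_of_le (hbound (k + 1) i) (hbound k i)
    simpa only [dist_eq_norm, Fintype.card_fin] using euclideanSpace_norm_sq_le_card_mul hcoord
  have hbarLeast (k : ℕ) : IsLeast (V ∩ Set.Ioi k) (kbar k) :=
    ⟨⟨(hkbar k).1, (hkbar k).2.1⟩, fun j hj => (hkbar k).2.2 j hj.1 hj.2⟩
  have hsum := stmt_15_general hfix hactive hbarLeast hstep a b
  have hslack : 0 ≤ (τ : ℝ) * (τ - 1) * M * w ^ 2 := by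
    have : 0 ≤ (τ : ℝ) - 1 := sub_nonneg.2 (mod_cast hτ)
    positivity
  simp only [dist_eq_norm, Nat.cast_choose_two] at hsum
  linarith
end
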